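/- Let q be a complex number with 0 < |q| < 1, fix a square root q^{1/2} of q, and let a, b, c be complex numbers with max{|a|,|b|,|c|} < 1. Then ∫₀^π h(cos θ; 1, -1, q^{1/2}, -q^{1/2}) / h(cos θ; a, b, c) dθ = 2π / ((q; q)_∞ (ab; q)_∞ (ac; q)_∞ (bc; q)_∞). -/

import Mathlib

open Complex MeasureTheory

/-- The q-shifted factorial `(x; q)_∞ = ∏_{k=0}^∞ (1 - x q^k)`. -/
noncomputable def qp (q x : ℂ) : ℂ := ∏' k : ℕ, (1 - x * q ^ k)

/-- The finite q-shifted factorial `(x; q)_n = ∏_{k=0}^{n-1} (1 - x q^k)`. -/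
noncomputable def qpn (q x : ℂ) (n : ℕ) : ℂ := ∏ k ∈ Finset.range n, (1 - x * q ^ k)

/-- For `x = cos θ`, `h(x; λ) = (λ e^{iθ}; q)_∞ (λ e^{-iθ}; q)_∞`. -/
noncomputable def hh (q : ℂ) (θ : ℝ) (l : ℂ) : ℂ :=
  qp q (l * Complex.exp ((θ : ℂ) * Complex.I)) *
    qp q (l * Complex.exp (-((θ : ℂ) * Complex.I)))


section helpers
open Filter Topology Set

lemma qp_summ {q : ℂ} (hq : ‖q‖ < 1) (x : ℂ) : Summable fun k : ℕ => ‖-(x * q ^ k)‖ := by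
  simpa using (summable_geometric_of_lt_one (norm_nonneg _) hq).mul_left ‖x‖

lemma qp_mult {q : ℂ} (hq : ‖q‖ < 1) (x : ℂ) : Multipliable fun k : ℕ => (1 - x * q ^ k) := by
  simpa [sub_eq_add_neg] using multipliable_one_add_of_summable (qp_summ hq x)

lemma qp_diff {q : ℂ} (hq : ‖q‖ < 1) : Differentiable ℂ (qp q) := by
  have h : ∀ r : ℝ, 0 < r → DifferentiableOn ℂ (qp q) (Metric.ball 0 r) := by
    intro r hr
    have hs : Summable fun k : ℕ => r * ‖q‖ ^ k :=
      (summable_geometric_of_lt_one (norm_nonneg _) hq).mul_left r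
    have := hs.hasProdLocallyUniformlyOn_nat_one_add (f := fun k x => -(x * q ^ k))
      (K := Metric.ball (0 : ℂ) r) Metric.isOpen_ball
      (.of_forall fun n x hx => by
        have : ‖x‖ < r := by simpa using hx
        simp only [norm_neg, norm_mul, norm_pow]
        gcongr) (fun _ => by fun_prop)
    have h2 := this.differentiableOn
      (.of_forall fun _ ↦ by simpa [Finset.prod_fn] using
        DifferentiableOn.finsetProd (fun _ _ ↦ by fun_prop)) Metric.isOpen_ball
    refine h2.congr fun x _ => ?_
    simp [qp, sub_eq_add_neg]
  intro x
  exact (h (‖x‖ + 1) (by positivity)).differentiableAt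
    (Metric.isOpen_ball.mem_nhds (by simp))

lemma qp_cont {q : ℂ} (hq : ‖q‖ < 1) : Continuous (qp q) := (qp_diff hq).continuous

lemma qp_succ {q : ℂ} (hq : ‖q‖ < 1) (x : ℂ) : qp q x = (1 - x) * qp q (q * x) := by
  have h : Multipliable fun k : ℕ => (1 - x * q ^ (k + 1)) := by
    convert qp_mult hq (q * x) using 3
    ring
  have e := tprod_eq_zero_mul' (f := fun k : ℕ => 1 - x * q ^ k) h
  have e2 : ∏' k : ℕ, (1 - x * q ^ (k + 1)) = ∏' k : ℕ, (1 - q * x * q ^ k) :=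
    tprod_congr fun k => by ring
  rw [e2] at e
  simpa [qp] using e

lemma qp_ne {q : ℂ} (hq : ‖q‖ < 1) {x : ℂ} (hx : ‖x‖ < 1) : qp q x ≠ 0 := by
  have := tprod_one_add_ne_zero_of_summable (f := fun k : ℕ => -(x * q ^ k)) (fun i => ?_)
    (qp_summ hq x)
  · simpa [qp, sub_eq_add_neg] using this
  · intro h
    have h1 : x * q ^ i = 1 := by linear_combination -h
    have h2 : ‖x * q ^ i‖ < 1 := by
      rw [norm_mul, norm_pow]
      exact mul_lt_one_of_nonneg_of_lt_one_left (norm_nonneg _) hx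
        (pow_le_one₀ (norm_nonneg _) hq.le)
    rw [h1] at h2
    simp at h2

lemma qp_zero (q : ℂ) : qp q 0 = 1 := by simp [qp]

lemma qp_tendsto {q : ℂ} (hq : ‖q‖ < 1) (x : ℂ) :
    Tendsto (fun n => qpn q x n) atTop (𝓝 (qp q x)) :=
  (qp_mult hq x).hasProd.tendsto_prod_nat

/-- Duplication. -/
lemma qp_dup {q u : ℂ} (hq : ‖q‖ < 1) (hu : u ^ 2 = q) (z : ℂ) :
    qp q z * qp q (-z) * qp q (u * z) * qp q (-(u * z)) = qp q (z ^ 2) := by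
  have h2 : ‖q ^ 2‖ < 1 := by rw [norm_pow]; exact pow_lt_one₀ (norm_nonneg _) hq (by norm_num)
  have e1 : ∀ y : ℂ, qp q y * qp q (-y) = qp (q ^ 2) (y ^ 2) := by
    intro y
    unfold qp
    rw [← (qp_mult hq y).tprod_mul (qp_mult hq (-y))]
    refine tprod_congr fun k => ?_
    ring
  have e2 : qp (q ^ 2) (z ^ 2) * qp (q ^ 2) ((u * z) ^ 2) = qp q (z ^ 2) := by
    unfold qp
    have := tprod_even_mul_odd (f := fun k => 1 - z ^ 2 * q ^ k)
      (by convert qp_mult h2 (z ^ 2) using 3; ring)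
      (by convert qp_mult h2 ((u * z) ^ 2) using 3; rw [mul_pow, hu]; ring)
    rw [← this]
    congr 1
    · refine tprod_congr fun k => ?_
      ring
    · refine tprod_congr fun k => ?_
      rw [mul_pow, hu]; ring
  rw [e1, mul_assoc, e1, e2]

/-- integral over the unit circle -/
noncomputable def cm (g : ℂ → ℂ) : ℂ := ∫ θ in (0:ℝ)..(2 * Real.pi), g (circleMap 0 1 θ)

lemma cm_congr {f g : ℂ → ℂ} (h : ∀ z : ℂ, ‖z‖ = 1 → f z = g z) : cm f = cm g := by
  unfold cm
  congr 1
  ext θ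
  exact h _ (by simp)

lemma cm_rot (f : ℂ → ℂ) (r : ℂ) : cm (fun z => f (r * z)) =
    ∫ θ in (0:ℝ)..(2 * Real.pi), f (circleMap 0 ‖r‖ θ) := by
  have e : ∀ θ : ℝ, r * circleMap 0 1 θ = circleMap 0 ‖r‖ (θ + r.arg) := by
    intro θ
    have h := Complex.norm_mul_exp_arg_mul_I r
    simp only [circleMap, zero_add, ofReal_one, one_mul, ofReal_add, add_mul, Complex.exp_add]
    linear_combination (-cexp (θ * I)) * h
  unfold cm
  simp only [e]
  rw [intervalIntegral.integral_comp_add_right (fun θ => f (circleMap 0 ‖r‖ θ))]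
  have hp : Function.Periodic (fun θ => f (circleMap 0 ‖r‖ θ)) (2 * Real.pi) := by
    intro θ
    simp [periodic_circleMap 0 ‖r‖ θ]
  have := hp.intervalIntegral_add_eq (r.arg) 0
  rw [zero_add, add_comm _ r.arg, this, zero_add]

lemma cm_shift {f : ℂ → ℂ} {r s : ℂ} (hr : 0 < ‖r‖) (hrs : ‖r‖ ≤ ‖s‖)
    (hf : ∀ z : ℂ, ‖r‖ ≤ ‖z‖ → ‖z‖ ≤ ‖s‖ → DifferentiableAt ℂ f z) :
    cm (fun z => f (r * z)) = cm (fun z => f (s * z)) := by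
  rw [cm_rot, cm_rot]
  have := circleIntegral_sub_center_inv_smul_eq_of_differentiable_on_annulus_off_countable
    (c := 0) hr hrs (f := f) (s := ∅) (by simp)
    (fun z hz => (hf z (by simpa using hz.2) (by simpa using hz.1)).continuousAt.continuousWithinAt)
    (fun z hz => hf z (by have := hz.1.2; simp at this; exact this.le)
      (by have := hz.1.1; simp at this; exact this.le))
  have e : ∀ t : ℝ, 0 < t → (∮ z in C(0, t), (z - 0)⁻¹ • f z) =
      I * ∫ θ in (0:ℝ)..(2 * Real.pi), f (circleMap 0 t θ) := by
    intro t ht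
    rw [circleIntegral, ← intervalIntegral.integral_const_mul]
    congr 1
    ext θ
    have : circleMap 0 t θ ≠ 0 := circleMap_ne_center ht.ne'
    simp
    field_simp
  rw [e _ hr, e _ (hr.trans_le hrs)] at this
  exact (mul_left_cancel₀ I_ne_zero this).symm

lemma cm_mean {f : ℂ → ℂ} (hf : Differentiable ℂ f) : cm f = 2 * Real.pi * f 0 := by
  have := (hf.diffContOnCl (s := Metric.ball 0 |1|)).circleAverage
  rw [Real.circleAverage_def] at this
  unfold cm
  rw [← this]
  have : (Real.pi : ℂ) ≠ 0 := by exact_mod_cast Real.pi_ne_zero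
  simp
  field_simp

lemma cm_tendsto {q : ℂ} (hq : ‖q‖ < 1) {R : ℂ → ℂ → ℂ}
    (hR : ContinuousOn (Function.uncurry R) (Metric.ball 0 1 ×ˢ Metric.sphere 0 1))
    {s : ℂ} (hs : ‖s‖ < 1) :
    Tendsto (fun n : ℕ => cm (R (q ^ n * s))) atTop (𝓝 (cm (R 0))) := by
  have hc : Continuous fun x : Metric.ball (0:ℂ) 1 => cm (R x) := by
    unfold cm
    apply intervalIntegral.continuous_parametric_intervalIntegral_of_continuous'
    have : Continuous fun p : Metric.ball (0:ℂ) 1 × ℝ => ((p.1 : ℂ), circleMap 0 1 p.2) := by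
      fun_prop
    exact hR.comp_continuous this (fun p => ⟨p.1.2, by simp⟩)
  have hb : ∀ n : ℕ, q ^ n * s ∈ Metric.ball (0:ℂ) 1 := by
    intro n
    simp only [Metric.mem_ball, dist_zero_right, norm_mul, norm_pow]
    exact mul_lt_one_of_nonneg_of_lt_one_right (pow_le_one₀ (norm_nonneg _) hq.le)
      (norm_nonneg _) hs
  have ht : Tendsto (fun n : ℕ => (⟨q ^ n * s, hb n⟩ : Metric.ball (0:ℂ) 1)) atTop
      (𝓝 ⟨0, by simp⟩) := by
    rw [tendsto_subtype_rng]
    simpa using (tendsto_pow_atTop_nhds_zero_of_norm_lt_one hq).mul_const s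
  exact (hc.tendsto _).comp ht

lemma cm_ii {g : ℂ → ℂ} (hg : ContinuousOn g (Metric.sphere 0 1)) :
    IntervalIntegrable (fun θ => g (circleMap 0 1 θ)) volume 0 (2 * Real.pi) := by
  apply Continuous.intervalIntegrable
  exact hg.comp_continuous (continuous_circleMap 0 1) (fun θ => by simp)

lemma cm_sub {f g : ℂ → ℂ} (hf : ContinuousOn f (Metric.sphere 0 1))
    (hg : ContinuousOn g (Metric.sphere 0 1)) : cm (fun z => f z - g z) = cm f - cm g :=
  intervalIntegral.integral_sub (cm_ii hf) (cm_ii hg)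

lemma cm_add {f g : ℂ → ℂ} (hf : ContinuousOn f (Metric.sphere 0 1))
    (hg : ContinuousOn g (Metric.sphere 0 1)) : cm (fun z => f z + g z) = cm f + cm g :=
  intervalIntegral.integral_add (cm_ii hf) (cm_ii hg)

lemma cm_mul (c : ℂ) (f : ℂ → ℂ) : cm (fun z => c * f z) = c * cm f :=
  intervalIntegral.integral_const_mul _ _

lemma ne_of_norm_one {z : ℂ} (hz : ‖z‖ = 1) : z ≠ 0 := by
  rintro rfl
  simp at hz

lemma qp_comp_cont {X : Type*} [TopologicalSpace X] {q : ℂ} (hq : ‖q‖ < 1) {f : X → ℂ} {s : Set X}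
    (hf : ContinuousOn f s) : ContinuousOn (fun x => qp q (f x)) s :=
  (qp_cont hq).comp_continuousOn hf

lemma inv_sq_cont : ContinuousOn (fun z : ℂ => (z ^ 2)⁻¹) (Metric.sphere 0 1) :=
  ContinuousOn.inv₀ (by fun_prop) fun z hz => pow_ne_zero _ (ne_of_norm_one (by simpa using hz))

lemma inv_cont : ContinuousOn (fun z : ℂ => z⁻¹) (Metric.sphere 0 1) :=
  ContinuousOn.inv₀ (by fun_prop) fun z hz => ne_of_norm_one (by simpa using hz)

/-- theta-type integrand -/
noncomputable def Bi (q t z : ℂ) : ℂ :=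
  qp q (z ^ 2) * qp q (q * (z ^ 2)⁻¹) / qp q (t * (z ^ 2)⁻¹)

lemma Bi_cont {q t : ℂ} (hq : ‖q‖ < 1) (ht : ‖t‖ < 1) :
    ContinuousOn (Bi q t) (Metric.sphere 0 1) := by
  unfold Bi
  refine ContinuousOn.div (ContinuousOn.mul (qp_comp_cont hq (by fun_prop))
    (qp_comp_cont hq (continuousOn_const.mul inv_sq_cont)))
    (qp_comp_cont hq (continuousOn_const.mul inv_sq_cont)) fun z hz => qp_ne hq ?_
  have : ‖z‖ = 1 := by simpa using hz
  simpa [this] using ht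

lemma B_shift {q u t : ℂ} (hq0 : 0 < ‖q‖) (hq : ‖q‖ < 1) (hu : u ^ 2 = q) (ht : ‖t‖ < 1) :
    cm (fun z => -(z ^ 2)⁻¹ * Bi q t z) = cm (Bi q (q * t)) := by
  have hun : ‖u‖ ^ 2 = ‖q‖ := by rw [← norm_pow, hu]
  have hq0' : q ≠ 0 := norm_pos_iff.mp hq0
  have hu0 : u ≠ 0 := by rintro rfl; simp at hu; exact hq0' hu.symm
  have hu1 : ‖u‖ ≤ 1 := by
    by_contra! h
    have : 1 < ‖u‖ ^ 2 := one_lt_pow₀ h (by norm_num)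
    linarith
  have key := cm_shift (f := Bi q (q * t)) (r := u) (s := 1) (norm_pos_iff.mpr hu0)
    (by simpa using hu1) (fun z h1 h2 => by
      have hz0 : z ≠ 0 := by
        rintro rfl
        simp at h1
        exact hu0 h1
      have hz2 : z ^ 2 ≠ 0 := pow_ne_zero _ hz0
      have hzq : ‖q‖ ≤ ‖z‖ ^ 2 := by rw [← hun]; gcongr
      have hn : qp q (q * t * (z ^ 2)⁻¹) ≠ 0 := by
        apply qp_ne hq
        rw [norm_mul, norm_mul, norm_inv, norm_pow]
        have h3 : 0 < ‖z‖ ^ 2 := by positivity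
        rw [← div_eq_mul_inv, div_lt_one h3]
        nlinarith
      unfold Bi
      have d := qp_diff hq
      have i : DifferentiableAt ℂ (fun z : ℂ => (z ^ 2)⁻¹) z :=
        DifferentiableAt.inv (by fun_prop) hz2
      refine DifferentiableAt.div (DifferentiableAt.mul ?_ ?_) ?_ hn
      · exact (d _).comp z (by fun_prop)
      · exact (d _).comp z (i.const_mul _)
      · exact (d _).comp z (i.const_mul _))
  simp only [one_mul] at key
  rw [← key]
  apply cm_congr
  intro z hz
  have hz0 := ne_of_norm_one hz
  unfold Bi
  have e1 : (u * z) ^ 2 = q * z ^ 2 := by rw [mul_pow, hu]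
  have e2 : q * (q * z ^ 2)⁻¹ = (z ^ 2)⁻¹ := by field_simp
  have e3 : q * t * (q * z ^ 2)⁻¹ = t * (z ^ 2)⁻¹ := by field_simp
  rw [e1, e2, e3, qp_succ hq (z ^ 2), qp_succ hq ((z ^ 2)⁻¹)]
  have : -(z ^ 2)⁻¹ * (1 - z ^ 2) = 1 - (z ^ 2)⁻¹ := by field_simp; ring
  rw [← this]
  ring

lemma B_rec {q u t : ℂ} (hq0 : 0 < ‖q‖) (hq : ‖q‖ < 1) (hu : u ^ 2 = q) (ht : ‖t‖ < 1) :
    cm (Bi q t) = (1 - t) * cm (Bi q (q * t)) := by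
  have hqt : ‖q * t‖ < 1 := by
    rw [norm_mul]; exact mul_lt_one_of_nonneg_of_lt_one_left (norm_nonneg _) hq ht.le
  have h1 : cm (Bi q t) = cm (fun z => Bi q (q * t) z - t * (-(z ^ 2)⁻¹ * Bi q t z)) := by
    apply cm_congr
    intro z hz
    have hn : qp q (q * (t * (z ^ 2)⁻¹)) ≠ 0 := qp_ne hq (by simpa [hz] using hqt)
    have hn2 : qp q (t * (z ^ 2)⁻¹) ≠ 0 := qp_ne hq (by simpa [hz] using ht)
    have hs := qp_succ hq (t * (z ^ 2)⁻¹)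
    unfold Bi
    rw [mul_assoc q t]
    have h1t : 1 - t * (z ^ 2)⁻¹ ≠ 0 := by
      intro h; rw [h, zero_mul] at hs; exact hn2 hs
    rw [hs]
    generalize (z ^ 2)⁻¹ = y at *
    generalize qp q (q * (t * y)) = V at *
    generalize qp q (z ^ 2) * qp q (q * y) = U at *
    field_simp
    ring
  rw [h1, cm_sub (g := fun z => t * (-(z ^ 2)⁻¹ * Bi q t z)) (Bi_cont hq hqt)
    (continuousOn_const.mul (inv_sq_cont.neg.mul (Bi_cont hq ht))),
    cm_mul, B_shift hq0 hq hu ht]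
  ring

lemma B_zero {q u : ℂ} (hq0 : 0 < ‖q‖) (hq : ‖q‖ < 1) (hu : u ^ 2 = q) :
    qp q q * cm (Bi q 0) = 2 * Real.pi := by
  have hb : ∀ n : ℕ, ‖q ^ n * q‖ < 1 := by
    intro n
    rw [← pow_succ, norm_pow]
    exact pow_lt_one₀ (norm_nonneg _) hq (by simp)
  have hit : ∀ n : ℕ, cm (Bi q q) = qpn q q n * cm (Bi q (q ^ n * q)) := by
    intro n
    induction n with
    | zero => simp [qpn]
    | succ n ih =>
      rw [ih, B_rec hq0 hq hu (hb n), qpn, qpn, Finset.prod_range_succ]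
      rw [show q * (q ^ n * q) = q ^ (n + 1) * q by ring]
      ring
  have hc : ContinuousOn (Function.uncurry (Bi q)) (Metric.ball 0 1 ×ˢ Metric.sphere 0 1) := by
    unfold Bi Function.uncurry
    have i : ContinuousOn (fun p : ℂ × ℂ => (p.2 ^ 2)⁻¹)
        (Metric.ball 0 1 ×ˢ Metric.sphere 0 1) :=
      inv_sq_cont.comp continuousOn_snd (fun p hp => hp.2)
    refine ContinuousOn.div (ContinuousOn.mul (qp_comp_cont hq (by fun_prop))
      (qp_comp_cont hq (continuousOn_const.mul i)))
      (qp_comp_cont hq (continuousOn_fst.mul i)) fun p hp => qp_ne hq ?_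
    have h1 : ‖p.1‖ < 1 := by simpa using hp.1
    have h2 : ‖p.2‖ = 1 := by simpa using hp.2
    simpa [h2] using h1
  have ht := (qp_tendsto hq q).mul (cm_tendsto hq hc hq)
  have hq' := tendsto_nhds_unique ht (tendsto_const_nhds.congr hit)
  rw [hq']
  have e : cm (Bi q q) = cm (fun z => qp q (z ^ 2)) := by
    apply cm_congr
    intro z hz
    have hn : qp q (q * (z ^ 2)⁻¹) ≠ 0 := qp_ne hq (by simpa [hz] using hq)
    unfold Bi
    exact mul_div_cancel_right₀ _ hn
  rw [e, cm_mean (f := fun z => qp q (z ^ 2)) ((qp_diff hq).comp (by fun_prop))]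
  simp [qp_zero]

/-- numerator -/
noncomputable def Wn (q z : ℂ) : ℂ := qp q (z ^ 2) * qp q ((z ^ 2)⁻¹)

lemma Wn_int {q u : ℂ} (hq0 : 0 < ‖q‖) (hq : ‖q‖ < 1) (hu : u ^ 2 = q) :
    qp q q * cm (Wn q) = 4 * Real.pi := by
  have h1 : cm (Wn q) = cm (fun z => Bi q 0 z + (-(z ^ 2)⁻¹ * Bi q 0 z)) := by
    apply cm_congr
    intro z hz
    unfold Wn Bi
    rw [qp_succ hq ((z ^ 2)⁻¹), zero_mul, qp_zero]
    ring
  have h0 : ‖(0:ℂ)‖ < 1 := by simp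
  rw [h1, cm_add (g := fun z => -(z ^ 2)⁻¹ * Bi q 0 z) (Bi_cont hq h0) (inv_sq_cont.neg.mul (Bi_cont hq h0)),
    B_shift hq0 hq hu h0, mul_zero]
  linear_combination 2 * B_zero hq0 hq hu

noncomputable def Dn (q a z : ℂ) : ℂ := qp q (a * z) * qp q (a * z⁻¹)

noncomputable def Ti (q a b c z : ℂ) : ℂ := Wn q z / (Dn q a z * Dn q b z * Dn q c z)

lemma Dn_ne {q a z : ℂ} (hq : ‖q‖ < 1) (ha : ‖a‖ < 1) (hz : ‖z‖ = 1) : Dn q a z ≠ 0 :=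
  mul_ne_zero (qp_ne hq (by simpa [hz] using ha)) (qp_ne hq (by simpa [hz] using ha))

lemma Wn_cont {q : ℂ} (hq : ‖q‖ < 1) : ContinuousOn (Wn q) (Metric.sphere 0 1) :=
  ContinuousOn.mul (qp_comp_cont hq (by fun_prop)) (qp_comp_cont hq inv_sq_cont)

lemma Dn_cont {q : ℂ} (hq : ‖q‖ < 1) (a : ℂ) : ContinuousOn (Dn q a) (Metric.sphere 0 1) :=
  ContinuousOn.mul (qp_comp_cont hq (by fun_prop))
    (qp_comp_cont hq (continuousOn_const.mul inv_cont))

lemma Ti_cont {q a b c : ℂ} (hq : ‖q‖ < 1) (ha : ‖a‖ < 1) (hb : ‖b‖ < 1) (hc : ‖c‖ < 1) :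
    ContinuousOn (Ti q a b c) (Metric.sphere 0 1) := by
  refine (Wn_cont hq).div (((Dn_cont hq a).mul (Dn_cont hq b)).mul (Dn_cont hq c)) ?_
  intro z hz
  have hz : ‖z‖ = 1 := by simpa using hz
  exact mul_ne_zero (mul_ne_zero (Dn_ne hq ha hz) (Dn_ne hq hb hz)) (Dn_ne hq hc hz)

/-- the shifted function -/
noncomputable def Sf (q u a b c z : ℂ) : ℂ :=
  (z - z⁻¹) * qp q (q * z ^ 2) * qp q (q * (z ^ 2)⁻¹) /
    (Dn q (u * a) z * Dn q (u * b) z * Dn q (u * c) z)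

lemma Dn_diff {q a z : ℂ} (hq : ‖q‖ < 1) (hz : z ≠ 0) : DifferentiableAt ℂ (Dn q a) z := by
  have d := qp_diff hq
  unfold Dn
  refine DifferentiableAt.mul ?_ ?_
  · exact (d _).comp z (by fun_prop)
  · exact (d _).comp z ((differentiableAt_inv hz).const_mul _)

lemma Dn_ne' {q u a z : ℂ} (hq : ‖q‖ < 1) (ha : ‖a‖ < 1) (hu0 : u ≠ 0) (h1 : ‖u‖ ≤ ‖z‖)
    (h2 : ‖z‖ ≤ ‖u⁻¹‖) : Dn q (u * a) z ≠ 0 := by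
  have hup : 0 < ‖u‖ := norm_pos_iff.mpr hu0
  have hzp : 0 < ‖z‖ := hup.trans_le h1
  have h3 : ‖u‖ * ‖z‖ ≤ 1 := by
    rw [norm_inv] at h2
    calc ‖u‖ * ‖z‖ ≤ ‖u‖ * ‖u‖⁻¹ := by gcongr
      _ = 1 := mul_inv_cancel₀ hup.ne'
  have h4 : ‖u‖ * ‖z‖⁻¹ ≤ 1 := by
    rw [← div_eq_mul_inv]; exact (div_le_one hzp).mpr h1
  refine mul_ne_zero (qp_ne hq ?_) (qp_ne hq ?_)
  · rw [norm_mul, norm_mul, show ‖u‖ * ‖a‖ * ‖z‖ = ‖a‖ * (‖u‖ * ‖z‖) by ring]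
    exact mul_lt_one_of_nonneg_of_lt_one_left (norm_nonneg _) ha h3
  · rw [norm_mul, norm_mul, norm_inv,
      show ‖u‖ * ‖a‖ * ‖z‖⁻¹ = ‖a‖ * (‖u‖ * ‖z‖⁻¹) by ring]
    exact mul_lt_one_of_nonneg_of_lt_one_left (norm_nonneg _) ha h4

lemma Dn_up {q u a z : ℂ} (hq : ‖q‖ < 1) (hu : u ^ 2 = q) (hu0 : u ≠ 0) :
    Dn q a z = (1 - a * z) * Dn q (u * a) (u * z) := by
  unfold Dn
  rw [qp_succ hq (a * z), ← hu]
  rw [show u * a * (u * z) = u ^ 2 * (a * z) by ring,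
    show u * a * (u * z)⁻¹ = a * z⁻¹ by rw [mul_inv]; field_simp]
  ring

lemma Dn_down {q u a z : ℂ} (hq : ‖q‖ < 1) (hu : u ^ 2 = q) (hu0 : u ≠ 0) :
    Dn q a z = (1 - a * z⁻¹) * Dn q (u * a) (u⁻¹ * z) := by
  unfold Dn
  rw [qp_succ hq (a * z⁻¹), ← hu]
  rw [show u * a * (u⁻¹ * z)⁻¹ = u ^ 2 * (a * z⁻¹) by rw [mul_inv, inv_inv]; ring,
    show u * a * (u⁻¹ * z) = a * z by field_simp]
  ring

lemma T_key {q u a b c : ℂ} (hq0 : 0 < ‖q‖) (hq : ‖q‖ < 1) (hu : u ^ 2 = q)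
    (ha : ‖a‖ < 1) (hb : ‖b‖ < 1) (hc : ‖c‖ < 1) :
    cm (fun z => Ti q a b c z * (z + z⁻¹ - (a + b + c) + a * b * c)) = 0 := by
  have hun : ‖u‖ ^ 2 = ‖q‖ := by rw [← norm_pow, hu]
  have hq0' : q ≠ 0 := norm_pos_iff.mp hq0
  have hu0 : u ≠ 0 := by rintro rfl; simp at hu; exact hq0' hu.symm
  have hu1 : ‖u‖ ≤ 1 := by
    by_contra! h
    have : 1 < ‖u‖ ^ 2 := one_lt_pow₀ h (by norm_num)
    linarith
  have hup : 0 < ‖u‖ := norm_pos_iff.mpr hu0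
  have hu2 : 1 ≤ ‖u⁻¹‖ := by rw [norm_inv]; exact (one_le_inv₀ hup).mpr hu1
  have hd : ∀ z : ℂ, ‖u‖ ≤ ‖z‖ → ‖z‖ ≤ ‖u⁻¹‖ → DifferentiableAt ℂ (Sf q u a b c) z := by
    intro z h1 h2
    have hz0 : z ≠ 0 := norm_pos_iff.mp (hup.trans_le h1)
    have hz2 : z ^ 2 ≠ 0 := pow_ne_zero _ hz0
    have d := qp_diff hq
    have i : DifferentiableAt ℂ (fun z : ℂ => (z ^ 2)⁻¹) z :=
      DifferentiableAt.inv (by fun_prop) hz2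
    have hn := mul_ne_zero (mul_ne_zero (Dn_ne' hq ha hu0 h1 h2) (Dn_ne' hq hb hu0 h1 h2))
      (Dn_ne' hq hc hu0 h1 h2)
    unfold Sf
    refine DifferentiableAt.div (DifferentiableAt.mul (DifferentiableAt.mul ?_ ?_) ?_)
      (((Dn_diff hq hz0).mul (Dn_diff hq hz0)).mul (Dn_diff hq hz0)) hn
    · exact differentiableAt_id.sub (differentiableAt_inv hz0)
    · exact (d _).comp z (by fun_prop)
    · exact (d _).comp z (i.const_mul _)
  have key := cm_shift hup (hu1.trans hu2) hd
  have hcont : ∀ r : ℂ, ‖u‖ ≤ ‖r‖ → ‖r‖ ≤ ‖u⁻¹‖ →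
      ContinuousOn (fun z => Sf q u a b c (r * z)) (Metric.sphere 0 1) := by
    intro r h1 h2 z hz
    have hz : ‖z‖ = 1 := by simpa using hz
    have := (hd (r * z) (by simpa [hz] using h1) (by simpa [hz] using h2)).continuousAt
    exact (ContinuousAt.comp (f := fun z => r * z) this (by fun_prop)).continuousWithinAt
  have h0 : cm (fun z => (-u) * (Sf q u a b c (u * z) - Sf q u a b c (u⁻¹ * z))) = 0 := by
    rw [cm_mul, cm_sub (hcont u le_rfl (hu1.trans hu2)) (hcont u⁻¹ (hu1.trans hu2) le_rfl), key]
    ring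
  rw [← h0]
  apply cm_congr
  intro z hz
  have hz0 := ne_of_norm_one hz
  have na := Dn_ne hq ha hz
  have nb := Dn_ne hq hb hz
  have nc := Dn_ne hq hc hz
  set X := qp q (q * z ^ 2) with hX
  set Y := qp q (q * (z ^ 2)⁻¹) with hY
  have hW : Wn q z = (1 - z ^ 2) * X * ((1 - (z ^ 2)⁻¹) * Y) := by
    unfold Wn; rw [qp_succ hq (z ^ 2), qp_succ hq (z ^ 2)⁻¹]
  have hXs : X = (1 - q * z ^ 2) * qp q (q * (q * z ^ 2)) := qp_succ hq _
  have hYs : Y = (1 - q * (z ^ 2)⁻¹) * qp q (q * (q * (z ^ 2)⁻¹)) := qp_succ hq _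
  have hup' : Sf q u a b c (u * z) = -(u * z)⁻¹ * X * ((1 - (z ^ 2)⁻¹) * Y) *
      ((1 - a * z) * (1 - b * z) * (1 - c * z)) / (Dn q a z * Dn q b z * Dn q c z) := by
    have ea := Dn_up (a := a) (z := z) hq hu hu0
    have eb := Dn_up (a := b) (z := z) hq hu hu0
    have ec := Dn_up (a := c) (z := z) hq hu hu0
    have ma : Dn q (u * a) (u * z) ≠ 0 := fun h => na (by rw [ea, h, mul_zero])
    have mb : Dn q (u * b) (u * z) ≠ 0 := fun h => nb (by rw [eb, h, mul_zero])
    have mc : Dn q (u * c) (u * z) ≠ 0 := fun h => nc (by rw [ec, h, mul_zero])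
    unfold Sf
    rw [show q * (u * z) ^ 2 = q * (q * z ^ 2) by rw [mul_pow, hu],
      show q * ((u * z) ^ 2)⁻¹ = (z ^ 2)⁻¹ by rw [mul_pow, hu]; field_simp,
      qp_succ hq (z ^ 2)⁻¹, ← hY, hXs,
      div_eq_div_iff (mul_ne_zero (mul_ne_zero ma mb) mc) (mul_ne_zero (mul_ne_zero na nb) nc),
      ea, eb, ec]
    have : u * z - (u * z)⁻¹ = -(u * z)⁻¹ * (1 - q * z ^ 2) := by
      rw [← hu]; field_simp; ring
    rw [this]
    ring
  have hdn' : Sf q u a b c (u⁻¹ * z) = z * u⁻¹ * Y * ((1 - z ^ 2) * X) *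
      ((1 - a * z⁻¹) * (1 - b * z⁻¹) * (1 - c * z⁻¹)) / (Dn q a z * Dn q b z * Dn q c z) := by
    have ea := Dn_down (a := a) (z := z) hq hu hu0
    have eb := Dn_down (a := b) (z := z) hq hu hu0
    have ec := Dn_down (a := c) (z := z) hq hu hu0
    have ma : Dn q (u * a) (u⁻¹ * z) ≠ 0 := fun h => na (by rw [ea, h, mul_zero])
    have mb : Dn q (u * b) (u⁻¹ * z) ≠ 0 := fun h => nb (by rw [eb, h, mul_zero])
    have mc : Dn q (u * c) (u⁻¹ * z) ≠ 0 := fun h => nc (by rw [ec, h, mul_zero])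
    unfold Sf
    rw [show q * (u⁻¹ * z) ^ 2 = z ^ 2 by rw [← hu]; field_simp,
      show q * ((u⁻¹ * z) ^ 2)⁻¹ = q * (q * (z ^ 2)⁻¹) by
        rw [mul_pow, mul_inv, inv_pow, inv_inv, hu],
      qp_succ hq (z ^ 2), ← hX, hYs,
      div_eq_div_iff (mul_ne_zero (mul_ne_zero ma mb) mc) (mul_ne_zero (mul_ne_zero na nb) nc),
      ea, eb, ec]
    have : u⁻¹ * z - (u⁻¹ * z)⁻¹ = z * u⁻¹ * (1 - q * (z ^ 2)⁻¹) := by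
      rw [← hu]; field_simp
    rw [this]
    ring
  rw [hup', hdn', Ti, hW]
  generalize Dn q a z = A at *
  generalize Dn q b z = B at *
  generalize Dn q c z = C at *
  clear_value X Y
  field_simp
  ring

lemma T_rec {q u a b c : ℂ} (hq0 : 0 < ‖q‖) (hq : ‖q‖ < 1) (hu : u ^ 2 = q)
    (ha : ‖a‖ < 1) (hb : ‖b‖ < 1) (hc : ‖c‖ < 1) :
    cm (Ti q (q * a) b c) = (1 - a * b) * (1 - a * c) * cm (Ti q a b c) := by
  have hqa : ‖q * a‖ < 1 := by
    rw [norm_mul]; exact mul_lt_one_of_nonneg_of_lt_one_left (norm_nonneg _) hq ha.le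
  have h1 : cm (Ti q (q * a) b c) = cm (fun z => (1 - a * b) * (1 - a * c) * Ti q a b c z +
      (-a) * (Ti q a b c z * (z + z⁻¹ - (a + b + c) + a * b * c))) := by
    apply cm_congr
    intro z hz
    have hz0 := ne_of_norm_one hz
    have na := Dn_ne hq ha hz
    have na' := Dn_ne hq hqa hz
    have nb := Dn_ne hq hb hz
    have nc := Dn_ne hq hc hz
    have e : Dn q a z = (1 - a * z) * (1 - a * z⁻¹) * Dn q (q * a) z := by
      unfold Dn
      rw [qp_succ hq (a * z), qp_succ hq (a * z⁻¹), mul_assoc q, mul_assoc q]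
      ring
    have e2 : Ti q (q * a) b c z = (1 - a * z) * (1 - a * z⁻¹) * Ti q a b c z := by
      unfold Ti
      rw [← mul_div_assoc, div_eq_div_iff (mul_ne_zero (mul_ne_zero na' nb) nc)
        (mul_ne_zero (mul_ne_zero na nb) nc), e]
      ring
    rw [e2]
    generalize Ti q a b c z = T
    field_simp
    ring
  have hT := Ti_cont hq ha hb hc
  rw [h1, cm_add (f := fun z => (1 - a * b) * (1 - a * c) * Ti q a b c z)
    (g := fun z => (-a) * (Ti q a b c z * (z + z⁻¹ - (a + b + c) + a * b * c)))
    (continuousOn_const.mul hT) (continuousOn_const.mul (hT.mul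
    (((continuousOn_id.add inv_cont).sub continuousOn_const).add continuousOn_const))),
    cm_mul, cm_mul, T_key hq0 hq hu ha hb hc]
  ring

lemma T_lim {q u a b c : ℂ} (hq0 : 0 < ‖q‖) (hq : ‖q‖ < 1) (hu : u ^ 2 = q)
    (ha : ‖a‖ < 1) (hb : ‖b‖ < 1) (hc : ‖c‖ < 1) :
    cm (Ti q 0 b c) = qp q (a * b) * qp q (a * c) * cm (Ti q a b c) := by
  have hbn : ∀ n : ℕ, ‖q ^ n * a‖ < 1 := by
    intro n
    rw [norm_mul, norm_pow]
    exact mul_lt_one_of_nonneg_of_lt_one_right (pow_le_one₀ (norm_nonneg _) hq.le)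
      (norm_nonneg _) ha
  have hit : ∀ n : ℕ, cm (Ti q (q ^ n * a) b c) =
      qpn q (a * b) n * qpn q (a * c) n * cm (Ti q a b c) := by
    intro n
    induction n with
    | zero => simp [qpn]
    | succ n ih =>
      rw [show q ^ (n + 1) * a = q * (q ^ n * a) by ring, T_rec hq0 hq hu (hbn n) hb hc, ih]
      simp only [qpn, Finset.prod_range_succ]
      ring
  have hcn : ContinuousOn (Function.uncurry fun s => Ti q s b c)
      (Metric.ball 0 1 ×ˢ Metric.sphere 0 1) := by
    unfold Function.uncurry
    have m : MapsTo Prod.snd (Metric.ball (0:ℂ) 1 ×ˢ Metric.sphere (0:ℂ) 1)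
      (Metric.sphere (0:ℂ) 1) := fun p hp => hp.2
    have i : ContinuousOn (fun p : ℂ × ℂ => (p.2)⁻¹)
        (Metric.ball 0 1 ×ˢ Metric.sphere 0 1) := inv_cont.comp continuousOn_snd m
    have hD : ContinuousOn (fun p : ℂ × ℂ => Dn q p.1 p.2)
        (Metric.ball 0 1 ×ˢ Metric.sphere 0 1) :=
      ContinuousOn.mul (qp_comp_cont hq (by fun_prop)) (qp_comp_cont hq (continuousOn_fst.mul i))
    refine ContinuousOn.div ((Wn_cont hq).comp continuousOn_snd m)
      ((hD.mul ((Dn_cont hq b).comp continuousOn_snd m)).mul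
        ((Dn_cont hq c).comp continuousOn_snd m)) fun p hp => ?_
    have h1 : ‖p.1‖ < 1 := by simpa using hp.1
    have h2 : ‖p.2‖ = 1 := by simpa using hp.2
    exact mul_ne_zero (mul_ne_zero (Dn_ne hq h1 h2) (Dn_ne hq hb h2)) (Dn_ne hq hc h2)
  have t1 := cm_tendsto hq hcn ha
  have t2 := ((qp_tendsto hq (a * b)).mul (qp_tendsto hq (a * c))).mul_const (cm (Ti q a b c))
  exact tendsto_nhds_unique t1 (t2.congr fun n => (hit n).symm)

lemma Ti_swap (q a b c : ℂ) : Ti q a b c = Ti q b a c := by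
  ext z; unfold Ti; ring

lemma Ti_swap' (q a b c : ℂ) : Ti q a b c = Ti q c b a := by
  ext z; unfold Ti; ring

lemma T_eval {q u a b c : ℂ} (hq0 : 0 < ‖q‖) (hq : ‖q‖ < 1) (hu : u ^ 2 = q)
    (ha : ‖a‖ < 1) (hb : ‖b‖ < 1) (hc : ‖c‖ < 1) :
    qp q q * (qp q (a * b) * qp q (a * c) * qp q (b * c)) * cm (Ti q a b c) = 4 * Real.pi := by
  have h0 : ‖(0:ℂ)‖ < 1 := by simp
  have e1 := T_lim hq0 hq hu ha hb hc
  have e2 := T_lim hq0 hq hu hb h0 hc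
  have e3 := T_lim hq0 hq hu hc h0 h0
  rw [Ti_swap q b 0 c, e1, mul_zero, qp_zero] at e2
  rw [Ti_swap' q c 0 0, e2, mul_zero, qp_zero] at e3
  have e4 : Ti q 0 0 0 = Wn q := by
    ext z; simp [Ti, Dn, qp_zero]
  rw [e4] at e3
  have := Wn_int hq0 hq hu
  rw [e3] at this
  linear_combination this

lemma half_int {f : ℝ → ℂ} (hf : Continuous f) (he : ∀ x, f (-x) = f x)
    (hp : Function.Periodic f (2 * Real.pi)) :
    ∫ θ in (0:ℝ)..(2 * Real.pi), f θ = 2 * ∫ θ in (0:ℝ)..Real.pi, f θ := by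
  have h1 := hp.intervalIntegral_add_eq (-Real.pi) 0
  rw [zero_add, show -Real.pi + 2 * Real.pi = Real.pi by ring] at h1
  rw [← h1, ← intervalIntegral.integral_add_adjacent_intervals (b := 0)
    (hf.intervalIntegrable _ _) (hf.intervalIntegrable _ _)]
  have h2 := intervalIntegral.integral_comp_neg (a := 0) (b := Real.pi) f
  simp only [he, neg_zero] at h2
  rw [← h2]
  ring

end helpers

theorem integral_step_six (q u a b c : ℂ) (hq0 : 0 < ‖q‖) (hq : ‖q‖ < 1) (hu : u ^ 2 = q)
    (ha : ‖a‖ < 1) (hb : ‖b‖ < 1) (hc : ‖c‖ < 1) :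
    ∫ θ in (0:ℝ)..Real.pi,
      (hh q θ 1 * hh q θ (-1) * hh q θ u * hh q θ (-u)) / (hh q θ a * hh q θ b * hh q θ c)
      = 2 * (Real.pi : ℂ) / (qp q q * qp q (a * b) * qp q (a * c) * qp q (b * c)) := by
  have hi : ∀ θ : ℝ, (hh q θ 1 * hh q θ (-1) * hh q θ u * hh q θ (-u)) /
      (hh q θ a * hh q θ b * hh q θ c) = Ti q a b c (circleMap 0 1 θ) := by
    intro θ
    have hz : circleMap 0 1 θ = cexp (θ * I) := by simp [circleMap]
    have hz' : cexp (-(θ * I)) = (cexp (θ * I))⁻¹ := Complex.exp_neg _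
    rw [hz]
    unfold Ti Dn hh Wn
    rw [hz']
    generalize cexp (θ * I) = z
    rw [← qp_dup hq hu z, ← inv_pow, ← qp_dup hq hu z⁻¹]
    simp only [one_mul, neg_mul]
    ring
  have hn : ∀ {x y : ℂ}, ‖x‖ < 1 → ‖y‖ < 1 → qp q (x * y) ≠ 0 := fun {x y} hx hy => qp_ne hq (by
    rw [norm_mul]; exact mul_lt_one_of_nonneg_of_lt_one_left (norm_nonneg _) hx hy.le)
  have hT := T_eval hq0 hq hu ha hb hc
  have hh2 := half_int (f := fun θ => Ti q a b c (circleMap 0 1 θ))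
    ((Ti_cont hq ha hb hc).comp_continuous (continuous_circleMap 0 1) (fun θ => by simp))
    (fun θ => by
      have : circleMap 0 1 (-θ) = (circleMap 0 1 θ)⁻¹ := by
        simp [circleMap, Complex.exp_neg]
      simp only [this]
      unfold Ti Wn Dn
      simp only [inv_inv, inv_pow]
      ring)
    (fun θ => by simp [periodic_circleMap 0 1 θ])
  change cm (Ti q a b c) = _ at hh2
  simp only [hi]
  rw [hh2] at hT
  rw [eq_div_iff (mul_ne_zero (mul_ne_zero (mul_ne_zero (qp_ne hq hq) (hn ha hb)) (hn ha hc))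
    (hn hb hc))]
  linear_combination hT / 2
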